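/- arXiv:math/0611435 — 3 statements merged into one kernel-verified Lean document; each statement's English description precedes it below -/
import Mathlib

section
/- Let 1 < k < 2 and define for v : ℝⁿ → ℂ the norm ‖v; V^k‖ = max(‖⟨ω⟩^k v‖_{L²}, ‖⟨ω⟩^{k−1} x v‖_{L²}). Then for every v ∈ V^k and t ∈ ℝ one has | ‖v; V^k‖ − ‖U(t)v; V^k‖ | ≤ |t| ‖v; H^k‖, and consequently ‖U(t)v; V^k‖ ≤ (1 + |t|) ‖v; V^k‖. -/
open MeasureTheory Complex
open scoped FourierTransform ENNReal

noncomputable section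

abbrev Vn (n : ℕ) := EuclideanSpace ℝ (Fin n)

/-- `⟨ω⟩^k = (1−Δ)^{k/2}`, as the Fourier multiplier `(1+4π²|ξ|²)^{k/2}`. -/
def japMul (n : ℕ) (k : ℝ) (f : Vn n → ℂ) : Vn n → ℂ :=
  𝓕⁻ (fun ξ => (((1 + (2 * Real.pi * ‖ξ‖) ^ 2) ^ (k / 2) : ℝ) : ℂ) * 𝓕 f ξ)

/-- The free Schrödinger group `U(t) = exp(i(t/2)Δ)` as a Fourier multiplier. -/
def Ufree (n : ℕ) (t : ℝ) (f : Vn n → ℂ) : Vn n → ℂ :=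
  𝓕⁻ (fun ξ => Complex.exp (-2 * (Real.pi : ℂ) ^ 2 * Complex.I * (t : ℂ) * ((‖ξ‖ ^ 2 : ℝ) : ℂ))
      * 𝓕 f ξ)

/-- The `H^k` norm `‖⟨ω⟩^k v‖₂`. -/
def HkNorm (n : ℕ) (k : ℝ) (f : Vn n → ℂ) : ℝ≥0∞ :=
  eLpNorm (japMul n k f) 2 volume

/-- The `V^k` norm `‖⟨ω⟩^k v‖₂ ∨ ‖⟨ω⟩^{k−1} x v‖₂`, the second norm being the `L²` norm of
the vector-valued function `x ↦ ⟨ω⟩^{k−1}(x_j v)`. -/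
def VkNorm (n : ℕ) (k : ℝ) (f : Vn n → ℂ) : ℝ≥0∞ :=
  HkNorm n k f ⊔
    eLpNorm (fun x : Vn n => (WithLp.equiv 2 (Fin n → ℂ)).symm
      (fun j => japMul n (k - 1) (fun y => (y j : ℂ) * f y) x)) 2 volume

open SchwartzMap LineDeriv

def jm (n : ℕ) (k : ℝ) (ξ : Vn n) : ℝ := (1 + (2 * Real.pi * ‖ξ‖) ^ 2) ^ (k / 2)

def um (n : ℕ) (t : ℝ) (ξ : Vn n) : ℂ :=
  Complex.exp (-2 * (Real.pi : ℂ) ^ 2 * Complex.I * (t : ℂ) * ((‖ξ‖ ^ 2 : ℝ) : ℂ))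

lemma jm_temp (n : ℕ) (k : ℝ) :
    Function.HasTemperateGrowth (fun ξ : Vn n => ((jm n k ξ : ℝ) : ℂ)) := by
  have h1 := Function.hasTemperateGrowth_one_add_norm_sq_rpow (Vn n) (k / 2)
  have h2 : Function.HasTemperateGrowth (fun ξ : Vn n => (2 * Real.pi) • ξ) :=
    ((2 * Real.pi) • ContinuousLinearMap.id ℝ (Vn n)).hasTemperateGrowth
  have h3 := Function.Complex.hasTemperateGrowth_ofReal.comp (h1.comp h2)
  have he : (fun ξ : Vn n => ((jm n k ξ : ℝ) : ℂ)) =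
      Complex.ofReal ∘ (fun x : Vn n => (1 + ‖x‖ ^ 2) ^ (k / 2)) ∘
        fun ξ : Vn n => (2 * Real.pi) • ξ := by
    funext ξ
    simp only [Function.comp_apply, jm, norm_smul, Real.norm_eq_abs]
    rw [abs_of_pos Real.two_pi_pos]
  rw [he]
  exact h3

lemma cis_temp : Function.HasTemperateGrowth (fun s : ℝ => Complex.exp (s * Complex.I)) := by
  have hd : ∀ s : ℝ, HasDerivAt (fun s : ℝ => Complex.exp (s * Complex.I))
      (Complex.exp (s * Complex.I) * Complex.I) s := by
    intro s
    have := ((hasDerivAt_id s).ofReal_comp.mul_const Complex.I).cexp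
    simpa using this
  have hit : ∀ m : ℕ, iteratedDeriv m (fun s : ℝ => Complex.exp (s * Complex.I))
      = fun s : ℝ => Complex.exp (s * Complex.I) * Complex.I ^ m := by
    intro m
    induction m with
    | zero => simp
    | succ m ih =>
      rw [iteratedDeriv_succ, ih]
      ext s
      rw [((hd s).mul_const _).deriv]
      ring
  refine ⟨?_, fun m => ⟨0, 1, fun s => ?_⟩⟩
  · exact (Complex.ofRealCLM.contDiff.mul contDiff_const).cexp
  · rw [norm_iteratedFDeriv_eq_norm_iteratedDeriv, hit]
    simp [Complex.norm_exp_ofReal_mul_I]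

lemma um_eq (n : ℕ) (t : ℝ) (ξ : Vn n) :
    um n t ξ = Complex.exp (((-2 * Real.pi ^ 2 * t * ‖ξ‖ ^ 2 : ℝ) : ℂ) * Complex.I) := by
  unfold um
  congr 1
  push_cast
  ring

lemma um_norm (n : ℕ) (t : ℝ) (ξ : Vn n) : ‖um n t ξ‖ = 1 := by
  rw [um_eq, Complex.norm_exp_ofReal_mul_I]

lemma um_temp (n : ℕ) (t : ℝ) : Function.HasTemperateGrowth (um n t) := by
  have h2 : Function.HasTemperateGrowth
      (fun ξ : Vn n => (-2 * Real.pi ^ 2 * t) * ‖ξ‖ ^ 2) := by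
    fun_prop
  have h3 := cis_temp.comp h2
  convert h3 using 1
  ext ξ
  rw [um_eq]
  rfl

lemma coord_temp (n : ℕ) (j : Fin n) :
    Function.HasTemperateGrowth (fun ξ : Vn n => ((ξ j : ℝ) : ℂ)) :=
  (Complex.ofRealCLM.comp (EuclideanSpace.proj j : Vn n →L[ℝ] ℝ)).hasTemperateGrowth

lemma planch (n : ℕ) (f : SchwartzMap (Vn n) ℂ) :
    eLpNorm (𝓕⁻ (f : Vn n → ℂ)) 2 volume = eLpNorm f 2 volume := by
  have h := norm_fourier_toL2_eq (𝓕⁻ f)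
  rw [FourierTransform.fourier_fourierInv_eq, norm_toLp, norm_toLp] at h
  have h1 : eLpNorm f 2 volume ≠ ⊤ := (f.eLpNorm_lt_top 2 volume).ne
  have h2 : eLpNorm (𝓕⁻ f : SchwartzMap (Vn n) ℂ) 2 volume ≠ ⊤ :=
    ((𝓕⁻ f : SchwartzMap (Vn n) ℂ).eLpNorm_lt_top 2 volume).ne
  rw [← fourierInv_coe]
  exact ((ENNReal.toReal_eq_toReal_iff' h1 h2).1 h).symm

def JS (n : ℕ) (k : ℝ) (f : SchwartzMap (Vn n) ℂ) : SchwartzMap (Vn n) ℂ :=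
  smulLeftCLM ℂ (fun ξ : Vn n => ((jm n k ξ : ℝ) : ℂ)) (𝓕 f)

lemma JS_apply (n : ℕ) (k : ℝ) (f : SchwartzMap (Vn n) ℂ) (ξ : Vn n) :
    JS n k f ξ = (jm n k ξ : ℂ) * (𝓕 f) ξ := by
  rw [JS, smulLeftCLM_apply_apply (jm_temp n k), smul_eq_mul]

lemma japMul_eq (n : ℕ) (k : ℝ) (f : SchwartzMap (Vn n) ℂ) :
    japMul n k f = 𝓕⁻ (JS n k f : Vn n → ℂ) := by
  unfold japMul
  congr 1
  ext ξ
  rw [JS_apply, fourier_coe]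
  rfl

lemma japMul_eq' (n : ℕ) (k : ℝ) (f : SchwartzMap (Vn n) ℂ) :
    japMul n k f = (𝓕⁻ (JS n k f) : SchwartzMap (Vn n) ℂ) := by
  rw [japMul_eq, fourierInv_coe]

def XS (n : ℕ) (j : Fin n) (f : SchwartzMap (Vn n) ℂ) : SchwartzMap (Vn n) ℂ :=
  smulLeftCLM ℂ (fun ξ : Vn n => ((ξ j : ℝ) : ℂ)) f

lemma XS_apply (n : ℕ) (j : Fin n) (f : SchwartzMap (Vn n) ℂ) (ξ : Vn n) :
    XS n j f ξ = (ξ j : ℂ) * f ξ := by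
  rw [XS, smulLeftCLM_apply_apply (coord_temp n j), smul_eq_mul]

def US (n : ℕ) (t : ℝ) (f : SchwartzMap (Vn n) ℂ) : SchwartzMap (Vn n) ℂ :=
  𝓕⁻ (smulLeftCLM ℂ (um n t) (𝓕 f))

lemma Ufree_eq (n : ℕ) (t : ℝ) (f : SchwartzMap (Vn n) ℂ) :
    Ufree n t f = US n t f := by
  rw [US, fourierInv_coe]
  unfold Ufree
  congr 1
  ext ξ
  rw [smulLeftCLM_apply_apply (um_temp n t), smul_eq_mul, fourier_coe]
  rfl

lemma fourier_US (n : ℕ) (t : ℝ) (f : SchwartzMap (Vn n) ℂ) :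
    𝓕 (US n t f) = smulLeftCLM ℂ (um n t) (𝓕 f) := by
  rw [US, FourierTransform.fourier_fourierInv_eq]

lemma fourier_US_apply (n : ℕ) (t : ℝ) (f : SchwartzMap (Vn n) ℂ) (ξ : Vn n) :
    𝓕 (US n t f) ξ = um n t ξ * (𝓕 f) ξ := by
  rw [fourier_US, smulLeftCLM_apply_apply (um_temp n t), smul_eq_mul]

lemma Hk_eq (n : ℕ) (k : ℝ) (f : SchwartzMap (Vn n) ℂ) :
    HkNorm n k f = eLpNorm (JS n k f) 2 volume := by
  rw [HkNorm, japMul_eq, planch]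

lemma Hk_US (n : ℕ) (k t : ℝ) (f : SchwartzMap (Vn n) ℂ) :
    HkNorm n k (US n t f) = HkNorm n k f := by
  rw [Hk_eq, Hk_eq]
  apply eLpNorm_congr_norm_ae
  refine Filter.Eventually.of_forall fun ξ => ?_
  rw [JS_apply, JS_apply, fourier_US_apply]
  simp [um_norm]

lemma fourier_XS (n : ℕ) (j : Fin n) (f : SchwartzMap (Vn n) ℂ) (ξ : Vn n) :
    𝓕 (XS n j f) ξ = (Complex.I / (2 * Real.pi)) *
      fderiv ℝ (𝓕 f : SchwartzMap (Vn n) ℂ) ξ (EuclideanSpace.single j 1) := by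
  have h := lineDerivOp_fourier_eq f (EuclideanSpace.single j (1 : ℝ))
  have h2 : smulLeftCLM ℂ (fun x : Vn n => inner ℝ x (EuclideanSpace.single j (1 : ℝ))) f
      = XS n j f := by
    ext x
    rw [XS_apply, smulLeftCLM_apply_apply (by fun_prop)]
    simp [EuclideanSpace.inner_single_right]
  rw [h2, FourierTransform.fourier_smul] at h
  have h3 := congrArg (fun F : SchwartzMap (Vn n) ℂ => F ξ) h
  simp only [lineDerivOp_apply_eq_fderiv, _root_.smul_apply, smul_eq_mul] at h3
  rw [h3]
  have : (Real.pi : ℂ) ≠ 0 := by exact_mod_cast Real.pi_ne_zero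
  field_simp
  ring_nf
  simp

/-- squared L2 norm of a vector-valued function -/
lemma vec_sq (n : ℕ) (F : Fin n → Vn n → ℂ) (hF : ∀ j, Continuous (F j)) :
    eLpNorm (fun x : Vn n => (WithLp.equiv 2 (Fin n → ℂ)).symm (fun j => F j x)) 2 volume ^ 2
      = ∑ j, eLpNorm (F j) 2 volume ^ 2 := by
  have key : ∀ {E : Type} [NormedAddCommGroup E] (G : Vn n → E),
      eLpNorm G 2 volume ^ 2 = ∫⁻ x, ‖G x‖ₑ ^ 2 := by
    intro E _ G
    rw [eLpNorm_eq_lintegral_rpow_enorm_toReal (by norm_num) (by norm_num), ← ENNReal.rpow_natCast,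
      ← ENNReal.rpow_mul]
    norm_num
  rw [key]
  simp_rw [key]
  rw [← lintegral_finsetSum]
  · congr 1
    ext x
    rw [← ofReal_norm, ← ENNReal.ofReal_pow (norm_nonneg _), EuclideanSpace.norm_sq_eq,
      ENNReal.ofReal_sum_of_nonneg (fun _ _ => by positivity)]
    congr 1
    ext j
    rw [← ofReal_norm, ← ENNReal.ofReal_pow (norm_nonneg _)]
    rfl
  · intro j _
    have := hF j
    fun_prop

def WS (n : ℕ) (k : ℝ) (f : SchwartzMap (Vn n) ℂ) : Vn n → EuclideanSpace ℂ (Fin n) :=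
  fun ξ => (WithLp.equiv 2 (Fin n → ℂ)).symm (fun j => JS n k (XS n j f) ξ)

lemma Vk_eq (n : ℕ) (k : ℝ) (f : SchwartzMap (Vn n) ℂ) :
    VkNorm n k f = HkNorm n k f ⊔ eLpNorm (WS n (k - 1) f) 2 volume := by
  unfold VkNorm
  congr 1
  have hx : ∀ j : Fin n, (fun y : Vn n => (y j : ℂ) * f y) = XS n j f := by
    intro j
    ext y
    rw [XS_apply]
  have hsq : ∀ a b : ℝ≥0∞, a ^ 2 = b ^ 2 → a = b := by
    intro a b h
    exact (ENNReal.pow_right_strictMono (two_ne_zero)).injective h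
  apply hsq
  simp_rw [hx]
  unfold WS
  rw [vec_sq n _ (fun j => by rw [japMul_eq']; exact SchwartzMap.continuous _),
    vec_sq n _ (fun j => SchwartzMap.continuous _)]
  simp_rw [japMul_eq, planch]

def QS (n : ℕ) (k t : ℝ) (f : SchwartzMap (Vn n) ℂ) : Vn n → EuclideanSpace ℂ (Fin n) :=
  fun ξ => (WithLp.equiv 2 (Fin n → ℂ)).symm
    (fun j => (t : ℂ) * ((jm n k ξ : ℂ) * (2 * Real.pi * (ξ j : ℂ) * (𝓕 f) ξ)))

lemma um_fderiv (n : ℕ) (t : ℝ) (g : SchwartzMap (Vn n) ℂ) (ξ : Vn n) (j : Fin n) :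
    fderiv ℝ (smulLeftCLM ℂ (um n t) g) ξ (EuclideanSpace.single j 1)
     = um n t ξ * (fderiv ℝ g ξ (EuclideanSpace.single j 1)
        - 4 * Real.pi ^ 2 * Complex.I * t * (ξ j : ℂ) * g ξ) := by
  have hfun : (smulLeftCLM ℂ (um n t) g : Vn n → ℂ) = fun x => um n t x * g x := by
    ext x
    rw [smulLeftCLM_apply_apply (um_temp n t), smul_eq_mul]
  have hu : HasFDerivAt (um n t) (um n t ξ • ((-2 * (Real.pi : ℂ) ^ 2 * Complex.I * (t : ℂ)) •
      Complex.ofRealCLM.comp (2 • innerSL ℝ ξ))) ξ := by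
    have h1 : HasFDerivAt (fun x : Vn n => ‖x‖ ^ 2) (2 • innerSL ℝ ξ) ξ :=
      (hasStrictFDerivAt_norm_sq ξ).hasFDerivAt
    have h2 := Complex.ofRealCLM.hasFDerivAt.comp ξ h1
    exact (h2.const_mul (-2 * (Real.pi : ℂ) ^ 2 * Complex.I * (t : ℂ))).cexp
  have hg : HasFDerivAt g (fderiv ℝ g ξ) ξ := g.differentiableAt.hasFDerivAt
  have hm : HasFDerivAt (fun x => um n t x * g x) _ ξ := hu.mul hg
  rw [hfun, hm.fderiv]
  simp [EuclideanSpace.inner_single_right]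
  ring

lemma WS_US (n : ℕ) (k t : ℝ) (f : SchwartzMap (Vn n) ℂ) (ξ : Vn n) :
    WS n k (US n t f) ξ = um n t ξ • (WS n k f ξ + QS n k t f ξ) := by
  ext j
  simp only [WS, QS, WithLp.equiv_symm_apply, PiLp.smul_apply, PiLp.add_apply, smul_eq_mul,
    JS_apply, fourier_XS]
  rw [fourier_US, um_fderiv]
  have : (Real.pi : ℂ) ≠ 0 := by exact_mod_cast Real.pi_ne_zero
  field_simp
  ring_nf
  simp

lemma WS_cont (n : ℕ) (k : ℝ) (f : SchwartzMap (Vn n) ℂ) : Continuous (WS n k f) := by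
  unfold WS
  have := fun j => (JS n k (XS n j f)).continuous
  simp only [WithLp.equiv_symm_apply]
  fun_prop

lemma QS_cont (n : ℕ) (k t : ℝ) (f : SchwartzMap (Vn n) ℂ) : Continuous (QS n k t f) := by
  unfold QS
  have := (jm_temp n k).1.continuous
  have := (𝓕 f).continuous
  simp only [WithLp.equiv_symm_apply]
  fun_prop

lemma QS_le (n : ℕ) (k t : ℝ) (f : SchwartzMap (Vn n) ℂ) :
    eLpNorm (QS n (k - 1) t f) 2 volume ≤ ENNReal.ofReal |t| * HkNorm n k f := by
  rw [Hk_eq]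
  have h1 : ENNReal.ofReal |t| * eLpNorm (JS n k f) 2 volume
      = eLpNorm (t • (JS n k f : Vn n → ℂ)) 2 volume := by
    rw [eLpNorm_const_smul, ← Real.norm_eq_abs, ofReal_norm]
  rw [h1]
  apply eLpNorm_mono
  intro ξ
  have h2 : QS n (k - 1) t f ξ = ((t : ℂ) * (jm n (k - 1) ξ : ℂ) * (2 * Real.pi) * (𝓕 f) ξ) •
      ((WithLp.equiv 2 (Fin n → ℂ)).symm (fun j => (ξ j : ℂ)) : EuclideanSpace ℂ (Fin n)) := by
    ext j
    simp [QS]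
    ring
  have h3 : ‖((WithLp.equiv 2 (Fin n → ℂ)).symm (fun j => (ξ j : ℂ)) :
      EuclideanSpace ℂ (Fin n))‖ = ‖ξ‖ := by
    rw [EuclideanSpace.norm_eq, EuclideanSpace.norm_eq]
    simp
  have hA : 0 < 1 + (2 * Real.pi * ‖ξ‖) ^ 2 := by positivity
  have h0 : ∀ k, 0 ≤ jm n k ξ := fun k => Real.rpow_nonneg hA.le _
  have h4 : jm n (k - 1) ξ * (2 * Real.pi * ‖ξ‖) ≤ jm n k ξ := by
    have : jm n k ξ = jm n (k - 1) ξ * (1 + (2 * Real.pi * ‖ξ‖) ^ 2) ^ (1 / 2 : ℝ) := by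
      unfold jm
      rw [← Real.rpow_add hA]
      congr 1
      ring
    rw [this]
    refine mul_le_mul_of_nonneg_left ?_ (h0 _)
    rw [← Real.sqrt_eq_rpow]
    apply Real.le_sqrt_of_sq_le
    linarith
  rw [h2, norm_smul, h3, Pi.smul_apply, norm_smul, JS_apply]
  simp only [norm_mul, Complex.norm_real, Real.norm_eq_abs, abs_of_nonneg (h0 _),
    abs_of_pos Real.pi_pos, Complex.norm_ofNat]
  calc _ = (|t| * ‖(𝓕 f) ξ‖) * (jm n (k - 1) ξ * (2 * Real.pi * ‖ξ‖)) := by ring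
    _ ≤ (|t| * ‖(𝓕 f) ξ‖) * jm n k ξ := by gcongr
    _ = _ := by ring

lemma WS_US_norm (n : ℕ) (k t : ℝ) (f : SchwartzMap (Vn n) ℂ) :
    eLpNorm (WS n k (US n t f)) 2 volume = eLpNorm (WS n k f + QS n k t f) 2 volume := by
  apply eLpNorm_congr_norm_ae
  refine Filter.Eventually.of_forall fun ξ => ?_
  rw [WS_US, norm_smul, um_norm, one_mul]
  rfl

/-- For `1 < k < 2`: `| ‖v;V^k‖ − ‖U(t)v;V^k‖ | ≤ |t| ‖v;H^k‖` (stated as the equivalent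
two-sided inequality in `ℝ≥0∞`), and consequently `‖U(t)v;V^k‖ ≤ (1+|t|) ‖v;V^k‖`. -/
theorem stmt_3 (n : ℕ) (hn : 1 ≤ n) (k : ℝ) (hk1 : 1 < k) (hk2 : k < 2)
    (v : SchwartzMap (Vn n) ℂ) (t : ℝ) :
    (VkNorm n k (Ufree n t (fun y => v y))
        ≤ VkNorm n k (fun y => v y) + ENNReal.ofReal |t| * HkNorm n k (fun y => v y)
      ∧ VkNorm n k (fun y => v y)
        ≤ VkNorm n k (Ufree n t (fun y => v y))
            + ENNReal.ofReal |t| * HkNorm n k (fun y => v y))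
    ∧ VkNorm n k (Ufree n t (fun y => v y))
        ≤ ENNReal.ofReal (1 + |t|) * VkNorm n k (fun y => v y) := by
  have hU : Ufree n t (fun y => v y) = US n t v := Ufree_eq n t v
  rw [hU]
  change (VkNorm n k (US n t v) ≤ VkNorm n k v + ENNReal.ofReal |t| * HkNorm n k v
      ∧ VkNorm n k v ≤ VkNorm n k (US n t v) + ENNReal.ofReal |t| * HkNorm n k v)
    ∧ VkNorm n k (US n t v) ≤ ENNReal.ofReal (1 + |t|) * VkNorm n k v
  have hQ := QS_le n k t v
  have mW : AEStronglyMeasurable (WS n (k - 1) v) volume :=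
    (WS_cont n (k - 1) v).aestronglyMeasurable
  have mQ : AEStronglyMeasurable (QS n (k - 1) t v) volume :=
    (QS_cont n (k - 1) t v).aestronglyMeasurable
  have h1 : eLpNorm (WS n (k - 1) (US n t v)) 2 volume
      ≤ eLpNorm (WS n (k - 1) v) 2 volume + ENNReal.ofReal |t| * HkNorm n k v := by
    rw [WS_US_norm]
    refine (eLpNorm_add_le mW mQ (by norm_num)).trans ?_
    gcongr
  have h2 : eLpNorm (WS n (k - 1) v) 2 volume
      ≤ eLpNorm (WS n (k - 1) (US n t v)) 2 volume + ENNReal.ofReal |t| * HkNorm n k v := by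
    rw [WS_US_norm]
    have : WS n (k - 1) v = (WS n (k - 1) v + QS n (k - 1) t v) - QS n (k - 1) t v := by simp
    conv_lhs => rw [this]
    refine (eLpNorm_sub_le (mW.add mQ) mQ (by norm_num)).trans ?_
    gcongr
  have hA : VkNorm n k (US n t v) ≤ VkNorm n k v + ENNReal.ofReal |t| * HkNorm n k v := by
    rw [Vk_eq, Vk_eq, Hk_US]
    refine sup_le (le_sup_left.trans le_self_add) (h1.trans ?_)
    gcongr
    exact le_sup_right
  refine ⟨⟨hA, ?_⟩, ?_⟩
  · rw [Vk_eq, Vk_eq, Hk_US]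
    refine sup_le (le_sup_left.trans le_self_add) (h2.trans ?_)
    gcongr
    exact le_sup_right
  · refine hA.trans ?_
    rw [ENNReal.ofReal_add zero_le_one (abs_nonneg t), ENNReal.ofReal_one, add_mul, one_mul]
    gcongr
    exact le_sup_left
end
end

section
/- Let n ≥ 1, 1 < k < 2, and set ℓ = k − 1. There is a constant C such that for all v ∈ 𝒮(ℝⁿ), ‖ω^ℓ (e^{i|x|²/2} v)‖_{L²} ≤ C(‖ω^ℓ v‖_{L²} + ‖|x|^ℓ v‖_{L²}). -/
open MeasureTheory Complex
open scoped FourierTransform ENNReal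

noncomputable section

/-- The fractional Laplacian `ω^ℓ = (−Δ)^{ℓ/2}`, as the Fourier multiplier `|ξ|^ℓ`. -/
def omMul (n : ℕ) (ℓ : ℝ) (f : Vn n → ℂ) : Vn n → ℂ :=
  𝓕⁻ (fun ξ => (((2 * Real.pi * ‖ξ‖) ^ ℓ : ℝ) : ℂ) * 𝓕 f ξ)

lemma aux_tg : (fun t : ℝ => Complex.exp (Complex.I * t)).HasTemperateGrowth := by
  have hd : ∀ c : ℂ, ∀ x : ℝ, HasDerivAt (fun t : ℝ => c * Complex.exp (Complex.I * t))
      (c * Complex.I * Complex.exp (Complex.I * x)) x := by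
    intro c x
    have h1 : HasDerivAt (fun t : ℝ => Complex.I * (t:ℂ)) (Complex.I * 1) x :=
      (Complex.ofRealCLM.hasDerivAt (x := x)).const_mul _
    convert! (h1.cexp.const_mul c) using 1
    ring
  have hi : ∀ m : ℕ, iteratedDeriv m (fun t : ℝ => Complex.exp (Complex.I * t))
      = fun t : ℝ => Complex.I ^ m * Complex.exp (Complex.I * t) := by
    intro m
    induction m with
    | zero => simp
    | succ m ih =>
      rw [iteratedDeriv_succ, ih]
      ext x
      rw [(hd _ x).deriv, pow_succ]
  refine ⟨?_, fun m => ⟨0, 1, fun x => ?_⟩⟩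
  · exact (contDiff_const.mul Complex.ofRealCLM.contDiff).cexp
  · rw [norm_iteratedFDeriv_eq_norm_iteratedDeriv, hi]
    simp [mul_comm Complex.I, Complex.norm_exp_ofReal_mul_I]

lemma aux_phase (n : ℕ) :
    (fun x : Vn n => Complex.exp (Complex.I * (‖x‖ ^ 2 : ℝ) / 2)).HasTemperateGrowth := by
  have h : (fun x : Vn n => (1/2 : ℝ) * ‖x‖ ^ 2).HasTemperateGrowth :=
    (Function.HasTemperateGrowth.const (1/2 : ℝ)).mul (Function.hasTemperateGrowth_norm_sq _)
  convert! aux_tg.comp h using 2 with x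
  simp only [Function.comp]
  congr 1
  push_cast
  ring

lemma aux_plancherel {n : ℕ} (g : Vn n → ℂ) (h1 : Integrable g) (h2 : MemLp g 2 volume) :
    eLpNorm (𝓕⁻ g) 2 volume = eLpNorm g 2 volume := by
  set G := h2.toLp g with hG
  have hae : (𝓕⁻ G : Lp (α := Vn n) ℂ 2 volume) =ᵐ[volume] 𝓕⁻ g := by
    apply ae_eq_of_integral_contDiff_smul_eq
    · exact (Lp.memLp _).locallyIntegrable (by norm_num)
    · apply Continuous.locallyIntegrable
      exact VectorFourier.fourierIntegral_continuous Real.continuous_fourierChar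
        (by simpa using! continuous_inner.neg) h1
    · intro φ φs φc
      have hg₁ : HasCompactSupport (Complex.ofRealCLM ∘ φ) := φc.comp_left rfl
      have hg₂ : ContDiff ℝ (⊤ : ℕ∞) (Complex.ofRealCLM ∘ φ) := by fun_prop
      let ψ : SchwartzMap (Vn n) ℂ := hg₁.toSchwartzMap hg₂
      have e1 : ∫ x, φ x • (𝓕⁻ G : Lp (α := Vn n) ℂ 2 volume) x
          = Lp.toTemperedDistribution (𝓕⁻ G : Lp (α := Vn n) ℂ 2 volume) ψ := by
        simp [Lp.toTemperedDistribution_apply, ψ]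
      rw [e1, ← Lp.fourierInv_toTemperedDistribution_eq, TemperedDistribution.fourierInv_apply,
        Lp.toTemperedDistribution_apply]
      have e2 : ∫ x, (𝓕⁻ ψ) x • G x = ∫ x, (𝓕⁻ ψ) x • g x := by
        apply integral_congr_ae
        filter_upwards [h2.coeFn_toLp] with x hx
        rw [hx]
      rw [e2, SchwartzMap.fourierInv_coe]
      have := VectorFourier.integral_fourierIntegral_smul_eq_flip (μ := volume) (ν := volume)
        (L := -innerₗ (Vn n)) (e := Real.fourierChar)
        Real.continuous_fourierChar (by simpa using! continuous_inner.neg)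
        (ψ.integrable (μ := volume)) h1
      have hfl : (-innerₗ (Vn n)).flip = -innerₗ (Vn n) := by
        ext x y
        simp [real_inner_comm]
      rw [hfl] at this
      refine this.trans ?_
      simp [ψ]
      rfl
  rw [← eLpNorm_congr_ae hae, ← eLpNorm_congr_ae h2.coeFn_toLp]
  have : ‖(𝓕⁻ G : Lp (α := Vn n) ℂ 2 volume)‖ = ‖G‖ := (Lp.fourierTransformₗᵢ (Vn n) ℂ).symm.norm_map G
  rw [Lp.norm_def, Lp.norm_def] at this
  exact (ENNReal.toReal_eq_toReal_iff' (Lp.eLpNorm_ne_top _) (Lp.eLpNorm_ne_top _)).1 this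

def wt (n : ℕ) (ℓ : ℝ) (y : Vn n) : ℝ := ‖y‖ ^ (-((n:ℝ) + 2 * ℓ))

lemma wt_nonneg (n : ℕ) (ℓ : ℝ) (y : Vn n) : 0 ≤ wt n ℓ y := by unfold wt; positivity

lemma wt_meas (n : ℕ) (ℓ : ℝ) : Measurable (wt n ℓ) := by unfold wt; fun_prop

def GG (n : ℕ) (ℓ : ℝ) (ξ : Vn n) : ℝ≥0∞ :=
  ∫⁻ y, ENNReal.ofReal (Real.sin (inner ℝ y ξ) ^ 2 * wt n ℓ y)

lemma GG_smul (n : ℕ) (ℓ : ℝ) (ξ : Vn n) (r : ℝ) (hr : 0 < r) :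
    GG n ℓ (r • ξ) = ENNReal.ofReal (r ^ (2 * ℓ)) * GG n ℓ ξ := by
  have hm : Measurable fun z : Vn n =>
      ENNReal.ofReal (Real.sin (inner ℝ z ξ) ^ 2 * wt n ℓ z) := by
    have := wt_meas n ℓ
    fun_prop
  have h1 : ∀ y : Vn n, ENNReal.ofReal (Real.sin (inner ℝ y (r • ξ)) ^ 2 * wt n ℓ y)
      = ENNReal.ofReal (r ^ ((n:ℝ) + 2 * ℓ)) *
        ENNReal.ofReal (Real.sin (inner ℝ (r • y) ξ) ^ 2 * wt n ℓ (r • y)) := by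
    intro y
    rw [← ENNReal.ofReal_mul (by positivity)]
    congr 1
    unfold wt
    rw [norm_smul, Real.norm_of_nonneg hr.le, Real.mul_rpow hr.le (norm_nonneg _),
      Real.rpow_neg hr.le, inner_smul_left, inner_smul_right]
    have : r ^ ((n:ℝ) + 2 * ℓ) ≠ 0 := by positivity
    simp
    field_simp
  unfold GG
  simp_rw [h1]
  rw [lintegral_const_mul' _ _ ENNReal.ofReal_ne_top]
  have h2 := lintegral_map (μ := (volume : Measure (Vn n))) hm (measurable_const_smul r)
  rw [← h2, Measure.map_addHaar_smul _ hr.ne', lintegral_smul_measure, smul_eq_mul, ← mul_assoc,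
    ← ENNReal.ofReal_mul (by positivity)]
  congr 2
  rw [abs_of_pos (by positivity), finrank_euclideanSpace, Fintype.card_fin, Real.rpow_add hr,
    Real.rpow_natCast]
  have : r ^ n ≠ 0 := by positivity
  field_simp

lemma GG_rot (n : ℕ) (ℓ : ℝ) (ξ η : Vn n) (h : ‖ξ‖ = ‖η‖) : GG n ℓ ξ = GG n ℓ η := by
  let A : Vn n ≃ₗᵢ[ℝ] Vn n := (Submodule.span ℝ {ξ - η})ᗮ.reflection
  have hA : A ξ = η := Submodule.reflection_sub h
  have hm : Measurable fun z : Vn n =>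
      ENNReal.ofReal (Real.sin (inner ℝ z η) ^ 2 * wt n ℓ z) := by
    have := wt_meas n ℓ
    fun_prop
  unfold GG
  rw [← (A.measurePreserving).lintegral_comp hm]
  congr 1
  ext y
  rw [← hA, A.inner_map_map]
  simp [wt]

lemma GG_eq (n : ℕ) (ℓ : ℝ) (hℓ : 0 < ℓ) (e : Vn n) (he : ‖e‖ = 1) (ξ : Vn n) :
    GG n ℓ ξ = ENNReal.ofReal (‖ξ‖ ^ (2 * ℓ)) * GG n ℓ e := by
  rcases eq_or_ne ξ 0 with rfl | h
  · rw [norm_zero, Real.zero_rpow (by positivity)]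
    simp [GG]
  · rw [← GG_smul n ℓ e _ (norm_pos_iff.2 h)]
    apply GG_rot
    simp [norm_smul, he]

lemma GG_ne_zero (n : ℕ) (ℓ : ℝ) (e : Vn n) (he : ‖e‖ = 1) : GG n ℓ e ≠ 0 := by
  have hm : Measurable fun z : Vn n =>
      ENNReal.ofReal (Real.sin (inner ℝ z e) ^ 2 * wt n ℓ z) := by
    have := wt_meas n ℓ
    fun_prop
  intro h
  unfold GG at h
  rw [lintegral_eq_zero_iff hm] at h
  have hU : IsOpen {z : Vn n | 0 < inner ℝ z e ∧ inner ℝ z e < (1:ℝ)} := by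
    apply IsOpen.and
    · exact isOpen_lt (by fun_prop) (by fun_prop)
    · exact isOpen_lt (by fun_prop) (by fun_prop)
  have hne : {z : Vn n | 0 < inner ℝ z e ∧ inner ℝ z e < (1:ℝ)}.Nonempty := by
    refine ⟨(1/2 : ℝ) • e, ?_⟩
    simp only [Set.mem_ofPred_eq, inner_smul_left, real_inner_self_eq_norm_sq, he]
    norm_num
  have hpos := hU.measure_pos volume hne
  have : volume {z : Vn n | 0 < inner ℝ z e ∧ inner ℝ z e < (1:ℝ)} = 0 := by
    refine measure_mono_null ?_ (ae_iff.1 h)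
    intro z hz
    simp only [Set.mem_ofPred_eq] at hz ⊢
    simp only [Pi.zero_apply, ENNReal.ofReal_eq_zero, not_le]
    have hs : 0 < Real.sin (inner ℝ z e) :=
      Real.sin_pos_of_pos_of_lt_pi hz.1 (by linarith [Real.pi_gt_three])
    have hz0 : z ≠ 0 := by rintro rfl; simp at hz
    have : 0 < ‖z‖ := norm_pos_iff.2 hz0
    unfold wt
    positivity
  exact hpos.ne' this

lemma GG_ne_top (n : ℕ) (hn : 1 ≤ n) (ℓ : ℝ) (h0 : 0 < ℓ) (h1 : ℓ < 1) (e : Vn n)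
    (he : ‖e‖ = 1) : GG n ℓ e ≠ ⊤ := by
  let h : ℝ → ℝ := fun r => min 1 (r ^ 2) * r ^ (-((n:ℝ) + 2 * ℓ))
  have : Nonempty (Fin n) := ⟨⟨0, hn⟩⟩
  have hint : Integrable (fun y : Vn n => h ‖y‖) := by
    rw [integrable_fun_norm_addHaar]
    rw [finrank_euclideanSpace, Fintype.card_fin, ← Set.Ioc_union_Ioi_eq_Ioi zero_le_one]
    have key : ∀ r : ℝ, 0 < r → r ^ (n - 1) * r ^ (-((n:ℝ) + 2 * ℓ)) = r ^ (-1 - 2 * ℓ) := by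
      intro r hr
      rw [← Real.rpow_natCast, ← Real.rpow_add hr]
      congr 1
      push_cast [Nat.cast_sub hn]
      ring
    apply IntegrableOn.union
    · have hi : IntegrableOn (fun r : ℝ => r ^ (1 - 2 * ℓ)) (Set.Ioc 0 1) := by
        rw [← intervalIntegrable_iff_integrableOn_Ioc_of_le zero_le_one]
        exact intervalIntegral.intervalIntegrable_rpow' (by linarith)
      refine hi.congr_fun ?_ measurableSet_Ioc
      intro r hr
      simp only [h, smul_eq_mul]
      rw [min_eq_right (by nlinarith [hr.1, hr.2]), mul_left_comm, key r hr.1,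
        ← Real.rpow_two, ← Real.rpow_add hr.1]
      congr 1
      ring
    · have hi : IntegrableOn (fun r : ℝ => r ^ (-1 - 2 * ℓ)) (Set.Ioi 1) :=
        integrableOn_Ioi_rpow_of_lt (by linarith) zero_lt_one
      refine hi.congr_fun ?_ measurableSet_Ioi
      intro r hr
      have hr : 1 < r := hr
      simp only [h, smul_eq_mul]
      rw [min_eq_left (by nlinarith), one_mul, key r (by linarith)]
  refine ne_top_of_le_ne_top hint.lintegral_lt_top.ne ?_
  unfold GG
  apply lintegral_mono
  intro y
  apply ENNReal.ofReal_le_ofReal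
  simp only [h, wt]
  gcongr
  apply le_min
  · exact Real.sin_sq_le_one _
  · rw [sq_le_sq, abs_norm]
    refine (Real.abs_sin_le_abs).trans ?_
    have := abs_real_inner_le_norm y e
    rwa [he, mul_one] at this

lemma sq_eLpNorm {n : ℕ} (g : Vn n → ℂ) :
    eLpNorm g 2 volume ^ 2 = ∫⁻ x, ENNReal.ofReal (‖g x‖ ^ 2) := by
  have h := eLpNorm_nnreal_pow_eq_lintegral (μ := (volume : Measure (Vn n))) (f := g) (p := 2)
    (by norm_num)
  simp only [NNReal.coe_ofNat, ENNReal.rpow_ofNat, ENNReal.coe_ofNat] at h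
  rw [h]
  congr 1
  ext x
  rw [ENNReal.ofReal_pow (norm_nonneg _), ofReal_norm]

lemma aux_mult {n : ℕ} (ℓ : ℝ) (h0 : 0 < ℓ) (h1 : ℓ < 1) (f : SchwartzMap (Vn n) ℂ) (p : ℝ≥0∞) :
    MemLp (fun ξ => (((2 * Real.pi * ‖ξ‖) ^ ℓ : ℝ) : ℂ) * f ξ) p volume := by
  have ht : (fun x : Vn n => (1 + Real.pi ^ 2) + ‖x‖ ^ 2).HasTemperateGrowth :=
    (Function.HasTemperateGrowth.const _).add (Function.hasTemperateGrowth_norm_sq _)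
  let u : SchwartzMap (Vn n) ℂ := SchwartzMap.smulLeftCLM ℂ
    (fun x : Vn n => (1 + Real.pi ^ 2) + ‖x‖ ^ 2) f
  have hu : ∀ x, u x = ((1 + Real.pi ^ 2) + ‖x‖ ^ 2) • f x := fun x =>
    SchwartzMap.smulLeftCLM_apply_apply ht f x
  refine (u.memLp p volume).mono ?_ ?_
  · apply Continuous.aestronglyMeasurable
    have hc : Continuous fun ξ : Vn n => (2 * Real.pi * ‖ξ‖) ^ ℓ :=
      (by fun_prop : Continuous fun ξ : Vn n => (2 * Real.pi * ‖ξ‖)).rpow_const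
        (fun _ => Or.inr h0.le)
    exact (Complex.continuous_ofReal.comp hc).mul f.continuous
  · refine Filter.Eventually.of_forall fun x => ?_
    have hp : 0 ≤ 2 * Real.pi * ‖x‖ := by positivity
    rw [hu, norm_smul, norm_mul, Complex.norm_real, Real.norm_of_nonneg (by positivity),
      Real.norm_of_nonneg (by positivity)]
    gcongr
    have : (2 * Real.pi * ‖x‖) ^ ℓ ≤ 1 + 2 * Real.pi * ‖x‖ := by
      calc (2 * Real.pi * ‖x‖) ^ ℓ ≤ (1 + 2 * Real.pi * ‖x‖) ^ ℓ := by
            gcongr; linarith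
        _ ≤ (1 + 2 * Real.pi * ‖x‖) ^ (1:ℝ) :=
            Real.rpow_le_rpow_of_exponent_le (by linarith) h1.le
        _ = _ := Real.rpow_one _
    nlinarith [sq_nonneg (Real.pi - ‖x‖)]

def SS {n : ℕ} (ℓ : ℝ) (f : SchwartzMap (Vn n) ℂ) : ℝ≥0∞ :=
  ∫⁻ ξ, ENNReal.ofReal ((2 * Real.pi * ‖ξ‖) ^ (2 * ℓ) * ‖𝓕 f ξ‖ ^ 2)

lemma omMul_sq {n : ℕ} (ℓ : ℝ) (h0 : 0 < ℓ) (h1 : ℓ < 1) (f : SchwartzMap (Vn n) ℂ) :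
    eLpNorm (omMul n ℓ (fun x => f x)) 2 volume ^ 2 = SS ℓ f := by
  unfold omMul SS
  have e : 𝓕 (fun x => f x) = ⇑(𝓕 f : SchwartzMap (Vn n) ℂ) := (SchwartzMap.fourier_coe f).symm
  rw [e, aux_plancherel _ (memLp_one_iff_integrable.1 (aux_mult ℓ h0 h1 (𝓕 f) 1))
    (aux_mult ℓ h0 h1 (𝓕 f) 2), sq_eLpNorm]
  congr 1
  ext ξ
  have hp : 0 ≤ 2 * Real.pi * ‖ξ‖ := by positivity
  rw [norm_mul, Complex.norm_real, Real.norm_of_nonneg (by positivity), mul_pow,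
    mul_comm 2 ℓ, Real.rpow_mul hp, Real.rpow_two]

lemma planch_S {n : ℕ} (u : SchwartzMap (Vn n) ℂ) :
    ∫⁻ x, ENNReal.ofReal (‖u x‖ ^ 2) = ∫⁻ ξ, ENNReal.ofReal (‖𝓕 u ξ‖ ^ 2) := by
  rw [← sq_eLpNorm, ← sq_eLpNorm, ← aux_plancherel (⇑(𝓕 u : SchwartzMap (Vn n) ℂ)) (𝓕 u).integrable ((𝓕 u).memLp 2 volume),
    ← SchwartzMap.fourierInv_coe, FourierTransform.fourierInv_fourier_eq]

lemma diff_S {n : ℕ} (f : SchwartzMap (Vn n) ℂ) (y : Vn n) :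
    ∫⁻ x, ENNReal.ofReal (‖f (x + y) - f x‖ ^ 2)
      = ∫⁻ ξ, ENNReal.ofReal (4 * Real.sin (inner ℝ y (Real.pi • ξ)) ^ 2 * ‖𝓕 f ξ‖ ^ 2) := by
  let u : SchwartzMap (Vn n) ℂ := f.compSubConstCLM ℂ (-y) - f
  have hu : ∀ x, f (x + y) - f x = u x := by
    intro x
    simp [u]
  have hF : ∀ ξ, 𝓕 u ξ = (Complex.exp (Complex.I * (2 * Real.pi * inner ℝ y ξ : ℝ)) - 1) * 𝓕 f ξ := by
    intro ξ
    have h1 : 𝓕 u = 𝓕 (f.compSubConstCLM ℂ (-y)) - 𝓕 f := by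
      simp only [u, sub_eq_add_neg, FourierTransform.fourier_add]
      congr 1
      exact map_neg (FourierTransform.fourierCLM ℂ (SchwartzMap (Vn n) ℂ)) f
    have h2 := congrFun (VectorFourier.fourierIntegral_comp_add_right Real.fourierChar volume
      (innerₗ (Vn n)) f y) ξ
    have h3 : 𝓕 (f.compSubConstCLM ℂ (-y)) ξ =
      VectorFourier.fourierIntegral Real.fourierChar volume
      (innerₗ (Vn n)) (f ∘ fun v => v + y) ξ := by
      rw [SchwartzMap.fourier_coe]
      change VectorFourier.fourierIntegral _ _ _ _ _ = _
      congr 1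
      ext x
      simp
    have h4 : 𝓕 f ξ = VectorFourier.fourierIntegral Real.fourierChar volume
      (innerₗ (Vn n)) f ξ := by
      rw [SchwartzMap.fourier_coe]; rfl
    rw [h1, _root_.sub_apply, h3, h2, ← h4, Circle.smul_def, Real.fourierChar_apply]
    simp only [innerₗ_apply_apply, smul_eq_mul]
    rw [sub_mul, one_mul, mul_comm Complex.I]
  simp_rw [hu]
  rw [planch_S]
  congr 1
  ext ξ
  rw [hF, norm_mul, Complex.norm_exp_I_mul_ofReal_sub_one, mul_pow, Real.norm_eq_abs, sq_abs,
    inner_smul_right]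
  congr 2
  rw [show 2 * Real.pi * inner ℝ y ξ / 2 = Real.pi * inner ℝ y ξ by ring]
  ring

def QQ {n : ℕ} (ℓ a : ℝ) (f : SchwartzMap (Vn n) ℂ) : ℝ≥0∞ :=
  ∫⁻ y, ∫⁻ x, ENNReal.ofReal (wt n ℓ y * ‖f (x + a • y) - f x‖ ^ 2)

/-- Tonelli with the sine kernel. -/
lemma sin_tonelli {n : ℕ} (ℓ : ℝ) (h0 : 0 < ℓ) (e : Vn n) (he : ‖e‖ = 1) (b : ℝ)
    (f : SchwartzMap (Vn n) ℂ) :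
    ∫⁻ y, ∫⁻ x, ENNReal.ofReal (wt n ℓ y * (4 * Real.sin (inner ℝ y (b • x)) ^ 2 * ‖f x‖ ^ 2))
      = 4 * GG n ℓ e * ∫⁻ x, ENNReal.ofReal ((|b| * ‖x‖) ^ (2 * ℓ) * ‖f x‖ ^ 2) := by
  have hw := wt_meas n ℓ
  have hf : Measurable f := f.continuous.measurable
  rw [lintegral_lintegral_swap]
  · have : ∀ x, ∫⁻ y, ENNReal.ofReal (wt n ℓ y * (4 * Real.sin (inner ℝ y (b • x)) ^ 2 * ‖f x‖ ^ 2))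
        = (4 * GG n ℓ e) * ENNReal.ofReal ((|b| * ‖x‖) ^ (2 * ℓ) * ‖f x‖ ^ 2) := by
      intro x
      have h1 : ∀ y, ENNReal.ofReal (wt n ℓ y * (4 * Real.sin (inner ℝ y (b • x)) ^ 2 * ‖f x‖ ^ 2))
        = ENNReal.ofReal (4 * ‖f x‖ ^ 2) *
          ENNReal.ofReal (Real.sin (inner ℝ y (b • x)) ^ 2 * wt n ℓ y) := by
        intro y
        rw [← ENNReal.ofReal_mul (by positivity)]
        congr 1
        ring
      simp_rw [h1]
      rw [lintegral_const_mul' _ _ ENNReal.ofReal_ne_top]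
      change _ * GG n ℓ (b • x) = _
      rw [GG_eq n ℓ h0 e he, norm_smul, Real.norm_eq_abs, ENNReal.ofReal_mul (by norm_num),
        ENNReal.ofReal_mul (by positivity), ENNReal.ofReal_ofNat]
      ring
    simp_rw [this]
    rw [lintegral_const_mul]
    have : Measurable fun x : Vn n => (|b| * ‖x‖) ^ (2 * ℓ) := by fun_prop
    fun_prop
  · apply Measurable.aemeasurable
    simp only [Function.uncurry_def]
    fun_prop

lemma QQ_eq {n : ℕ} (ℓ : ℝ) (h0 : 0 < ℓ) (e : Vn n) (he : ‖e‖ = 1) (a : ℝ)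
    (f : SchwartzMap (Vn n) ℂ) :
    QQ ℓ a f = 4 * GG n ℓ e * ∫⁻ x, ENNReal.ofReal ((|a * Real.pi| * ‖x‖) ^ (2 * ℓ) * ‖𝓕 f x‖ ^ 2) := by
  rw [← sin_tonelli ℓ h0 e he]
  unfold QQ
  congr 1
  ext y
  simp_rw [ENNReal.ofReal_mul (wt_nonneg n ℓ y)]
  rw [lintegral_const_mul' _ _ ENNReal.ofReal_ne_top, lintegral_const_mul' _ _ ENNReal.ofReal_ne_top,
    diff_S]
  simp_rw [inner_smul_left, inner_smul_right]
  congr 4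
  ext ξ
  simp
  congr 5
  ring

lemma QQ_two {n : ℕ} (ℓ : ℝ) (h0 : 0 < ℓ) (e : Vn n) (he : ‖e‖ = 1)
    (f : SchwartzMap (Vn n) ℂ) : QQ ℓ 2 f = 4 * GG n ℓ e * SS ℓ f := by
  rw [QQ_eq ℓ h0 e he, abs_of_pos (by positivity)]
  rfl

lemma QQ_le {n : ℕ} (ℓ : ℝ) (h0 : 0 < ℓ) (e : Vn n) (he : ‖e‖ = 1) (a : ℝ) (ha : |a| ≤ 2)
    (f : SchwartzMap (Vn n) ℂ) : QQ ℓ a f ≤ 4 * GG n ℓ e * SS ℓ f := by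
  rw [QQ_eq ℓ h0 e he]
  unfold SS
  gcongr
  rw [abs_mul, abs_of_pos Real.pi_pos]
  gcongr

lemma ptwise {n : ℕ} (v : Vn n → ℂ) (x y : Vn n) :
    ‖Complex.exp (Complex.I * (‖x + y‖ ^ 2 : ℝ) / 2) * v (x + y)
      - Complex.exp (Complex.I * (‖x - y‖ ^ 2 : ℝ) / 2) * v (x - y)‖ ^ 2 ≤
    4 * (‖v (x + y) - v (x - y)‖ ^ 2 + 4 * Real.sin (inner ℝ y x) ^ 2 * ‖v x‖ ^ 2
      + ‖v (x + y) - v x‖ ^ 2 + ‖v (x - y) - v x‖ ^ 2) := by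
  set t : ℝ := inner ℝ y x with ht
  set p := v (x + y)
  set m := v (x - y)
  have e1 : Complex.exp (Complex.I * (‖x + y‖ ^ 2 : ℝ) / 2) =
      Complex.exp (((‖x‖ ^ 2 + ‖y‖ ^ 2) / 2 : ℝ) * Complex.I) * (Real.cos t + Real.sin t * Complex.I) := by
    rw [Complex.ofReal_cos, Complex.ofReal_sin, ← Complex.exp_mul_I, ← Complex.exp_add,
      norm_add_sq_real, real_inner_comm, ← ht]
    congr 1; push_cast; ring
  have e2 : Complex.exp (Complex.I * (‖x - y‖ ^ 2 : ℝ) / 2) =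
      Complex.exp (((‖x‖ ^ 2 + ‖y‖ ^ 2) / 2 : ℝ) * Complex.I) * (Real.cos t - Real.sin t * Complex.I) := by
    have : (Real.cos t - Real.sin t * Complex.I : ℂ) = Complex.exp ((-t : ℂ) * Complex.I) := by
      rw [Complex.exp_mul_I, Complex.cos_neg, Complex.sin_neg, Complex.ofReal_cos,
        Complex.ofReal_sin]; ring
    rw [this, ← Complex.exp_add, norm_sub_sq_real, real_inner_comm, ← ht]
    congr 1; push_cast; ring
  have e3 : Complex.exp (Complex.I * (‖x + y‖ ^ 2 : ℝ) / 2) * p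
      - Complex.exp (Complex.I * (‖x - y‖ ^ 2 : ℝ) / 2) * m
      = Complex.exp (((‖x‖ ^ 2 + ‖y‖ ^ 2) / 2 : ℝ) * Complex.I) *
        ((Real.cos t : ℂ) * (p - m) + (Real.sin t : ℂ) * Complex.I * 2 * v x
          + (Real.sin t : ℂ) * Complex.I * (p - v x) + (Real.sin t : ℂ) * Complex.I * (m - v x)) := by
    rw [e1, e2]; ring
  rw [e3, norm_mul, Complex.norm_exp_ofReal_mul_I, one_mul]
  have hb : ‖(Real.cos t : ℂ) * (p - m) + (Real.sin t : ℂ) * Complex.I * 2 * v x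
          + (Real.sin t : ℂ) * Complex.I * (p - v x) + (Real.sin t : ℂ) * Complex.I * (m - v x)‖
      ≤ ‖p - m‖ + 2 * |Real.sin t| * ‖v x‖ + ‖p - v x‖ + ‖m - v x‖ := by
    refine norm_add₄_le.trans ?_
    simp only [norm_mul, Complex.norm_real, Complex.norm_I, mul_one, Real.norm_eq_abs,
      Complex.norm_ofNat]
    have hc := Real.abs_cos_le_one t
    have hs := Real.abs_sin_le_one t
    have i1 := mul_le_of_le_one_left (norm_nonneg (p - m)) hc
    have i2 := mul_le_of_le_one_left (norm_nonneg (p - v x)) hs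
    have i3 := mul_le_of_le_one_left (norm_nonneg (m - v x)) hs
    linarith
  have hq : 4 * Real.sin t ^ 2 * ‖v x‖ ^ 2 = (2 * |Real.sin t| * ‖v x‖) ^ 2 := by
    rw [mul_pow, mul_pow, sq_abs]; ring
  rw [hq]
  refine (pow_le_pow_left₀ (norm_nonneg _) hb 2).trans ?_
  generalize ‖p - m‖ = A
  generalize 2 * |Real.sin t| * ‖v x‖ = B
  generalize ‖p - v x‖ = C
  generalize ‖m - v x‖ = D
  nlinarith [sq_nonneg (A - B), sq_nonneg (A - C), sq_nonneg (A - D), sq_nonneg (B - C),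
    sq_nonneg (B - D), sq_nonneg (C - D)]

lemma QQ_two' {n : ℕ} (ℓ : ℝ) (f : SchwartzMap (Vn n) ℂ) :
    QQ ℓ 2 f = ∫⁻ y, ∫⁻ x, ENNReal.ofReal (wt n ℓ y * ‖f (x + y) - f (x - y)‖ ^ 2) := by
  unfold QQ
  congr 1
  ext y
  rw [← lintegral_sub_right_eq_self _ y]
  congr 1
  ext x
  rw [show x - y + (2:ℝ) • y = x + y by rw [two_smul]; abel]

lemma main_QQ {n : ℕ} (ℓ : ℝ) (h0 : 0 < ℓ) (e : Vn n) (he : ‖e‖ = 1)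
    (F v : SchwartzMap (Vn n) ℂ)
    (hF : ∀ x, F x = Complex.exp (Complex.I * (‖x‖ ^ 2 : ℝ) / 2) * v x) :
    QQ ℓ 2 F ≤ 4 * (QQ ℓ 2 v + 4 * GG n ℓ e * (∫⁻ x, ENNReal.ofReal (‖x‖ ^ (2 * ℓ) * ‖v x‖ ^ 2))
      + QQ ℓ 1 v + QQ ℓ (-1) v) := by
  have hw := wt_meas n ℓ
  have hv : Measurable v := v.continuous.measurable
  have hT := sin_tonelli ℓ h0 e he 1 v
  simp only [one_smul, abs_one, one_mul] at hT
  rw [← hT, QQ_two', QQ_two']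
  unfold QQ
  simp only [one_smul, neg_smul, ← sub_eq_add_neg]
  have M1 : Measurable fun q : Vn n × Vn n =>
    ENNReal.ofReal (wt n ℓ q.1 * ‖v (q.2 + q.1) - v (q.2 - q.1)‖ ^ 2) := by fun_prop
  have M2 : Measurable fun q : Vn n × Vn n =>
    ENNReal.ofReal (wt n ℓ q.1 * (4 * Real.sin (inner ℝ q.1 q.2) ^ 2 * ‖v q.2‖ ^ 2)) := by fun_prop
  have M3 : Measurable fun q : Vn n × Vn n =>
    ENNReal.ofReal (wt n ℓ q.1 * ‖v (q.2 + q.1) - v q.2‖ ^ 2) := by fun_prop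
  have M4 : Measurable fun q : Vn n × Vn n =>
    ENNReal.ofReal (wt n ℓ q.1 * ‖v (q.2 - q.1) - v q.2‖ ^ 2) := by fun_prop
  rw [← lintegral_add_left M1.lintegral_prod_right',
    ← lintegral_add_right _ M3.lintegral_prod_right',
    ← lintegral_add_right _ M4.lintegral_prod_right', ← lintegral_const_mul' _ _ (by norm_num)]
  apply lintegral_mono
  intro y
  have m1 := M1.comp (measurable_prodMk_left (x := y))
  have m3 := M3.comp (measurable_prodMk_left (x := y))
  have m4 := M4.comp (measurable_prodMk_left (x := y))
  simp only [Function.comp_def] at m1 m3 m4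
  dsimp only
  rw [← lintegral_add_left m1, ← lintegral_add_right _ m3, ← lintegral_add_right _ m4,
    ← lintegral_const_mul' _ _ (by norm_num)]
  apply lintegral_mono
  intro x
  have hy := wt_nonneg n ℓ y
  dsimp only
  rw [← ENNReal.ofReal_add (by positivity) (by positivity),
    ← ENNReal.ofReal_add (by positivity) (by positivity),
    ← ENNReal.ofReal_add (by positivity) (by positivity),
    show (4 : ℝ≥0∞) = ENNReal.ofReal 4 by simp, ← ENNReal.ofReal_mul (by norm_num)]
  apply ENNReal.ofReal_le_ofReal
  rw [hF, hF]
  have := mul_le_mul_of_nonneg_left (ptwise v x y) hy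
  linarith

theorem stmt_6 (n : ℕ) (hn : 1 ≤ n) (k : ℝ) (hk1 : 1 < k) (hk2 : k < 2) :
    ∃ C : ℝ, 0 < C ∧ ∀ v : SchwartzMap (Vn n) ℂ,
      eLpNorm (omMul n (k - 1) (fun x => Complex.exp (Complex.I * (‖x‖ ^ 2 : ℝ) / 2) * v x)) 2 volume
        ≤ ENNReal.ofReal C *
          (eLpNorm (omMul n (k - 1) (fun x => v x)) 2 volume
            + eLpNorm (fun x : Vn n => ((‖x‖ ^ (k - 1) : ℝ) : ℂ) * v x) 2 volume) := by
  refine ⟨4, by norm_num, fun v => ?_⟩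
  have h0 : 0 < k - 1 := by linarith
  have h1 : k - 1 < 1 := by linarith
  generalize k - 1 = ℓ at h0 h1
  let e : Vn n := EuclideanSpace.single ⟨0, hn⟩ (1:ℝ)
  have he : ‖e‖ = 1 := by simp [e]
  let F : SchwartzMap (Vn n) ℂ := SchwartzMap.smulLeftCLM ℂ
    (fun x : Vn n => Complex.exp (Complex.I * (‖x‖ ^ 2 : ℝ) / 2)) v
  have hF : ∀ x, F x = Complex.exp (Complex.I * (‖x‖ ^ 2 : ℝ) / 2) * v x := fun x =>
    SchwartzMap.smulLeftCLM_apply_apply (aux_phase n) v x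
  simp_rw [← hF]
  have hX : eLpNorm (fun x : Vn n => ((‖x‖ ^ ℓ : ℝ) : ℂ) * v x) 2 volume ^ 2
      = ∫⁻ x, ENNReal.ofReal (‖x‖ ^ (2 * ℓ) * ‖v x‖ ^ 2) := by
    rw [sq_eLpNorm]
    congr 1
    ext x
    rw [norm_mul, Complex.norm_real, Real.norm_of_nonneg (by positivity), mul_pow,
      mul_comm 2 ℓ, Real.rpow_mul (norm_nonneg _), Real.rpow_two]
  have hm := main_QQ ℓ h0 e he F v hF
  have q1 := QQ_le ℓ h0 e he 1 (by norm_num) v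
  have q2 := QQ_le ℓ h0 e he (-1) (by norm_num) v
  rw [QQ_two ℓ h0 e he, QQ_two ℓ h0 e he, ← hX] at hm
  rw [← omMul_sq ℓ h0 h1] at hm q1 q2
  rw [← omMul_sq ℓ h0 h1] at hm
  have c0 := GG_ne_zero n ℓ e he
  have c1 := GG_ne_top n hn ℓ h0 h1 e he
  generalize GG n ℓ e = c at *
  generalize eLpNorm (omMul n ℓ fun x => F x) 2 volume = A at *
  generalize eLpNorm (omMul n ℓ fun x => v x) 2 volume = B at *
  generalize eLpNorm (fun x : Vn n => ((‖x‖ ^ ℓ : ℝ) : ℂ) * v x) 2 volume = X at *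
  have h2 : 4 * c * A ^ 2 ≤ 4 * c * (4 * (B + X)) ^ 2 := by
    calc 4 * c * A ^ 2 ≤ 4 * (4 * c * B ^ 2 + 4 * c * X ^ 2 + 4 * c * B ^ 2 + 4 * c * B ^ 2) := by
          refine hm.trans ?_
          gcongr
      _ = 4 * c * (12 * B ^ 2 + 4 * X ^ 2) := by ring
      _ ≤ 4 * c * (12 * B ^ 2 + 4 * X ^ 2 + (4 * B ^ 2 + 12 * X ^ 2 + 32 * B * X)) := by
          exact mul_le_mul_right le_self_add _
      _ = _ := by ring
  rw [ENNReal.mul_le_mul_iff_right (mul_ne_zero (by norm_num) c0)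
    (ENNReal.mul_ne_top (by norm_num) c1)] at h2
  rw [ENNReal.ofReal_ofNat]
  exact (ENNReal.pow_le_pow_left_iff (by norm_num)).1 h2
end
end

section
/- In ℝ², let 1 < k < 2, t > 0, and define for ℂ²-valued v₁, v₂ the function B̌(v₁,v₂) = 2t^{−1} x_j Δ^{−1}∂_k Im(v̄_{1k} v_{2j} + v̄_{2k} v_{1j}). Then B̌(v₁,v₂) = 2t^{−1} Δ^{−1}∂_k Im(v̄_{1k} (x·v₂) + v̄_{2k} (x·v₁)), i.e. the multiplication by x_j may be commuted inside Δ^{−1}∂_k at the cost of replacing v_{ij} by x·v_i. -/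
open MeasureTheory Complex
open scoped FourierTransform ENNReal

noncomputable section

abbrev V2 := EuclideanSpace ℝ (Fin 2)

/-- `Δ^{−1}∂_k` on `ℝ²`, the Fourier multiplier `−iξ_k/|ξ|²` (here `−iξ_k/(2π|ξ|²)` with
Mathlib's Fourier normalization). -/
def invLapDeriv (k : Fin 2) (f : V2 → ℂ) : V2 → ℂ :=
  𝓕⁻ (fun ξ => (-Complex.I * (ξ k : ℂ)) / ((2 * Real.pi * ‖ξ‖ ^ 2 : ℝ) : ℂ) * 𝓕 f ξ)

lemma aux_polar (f : V2 → ℂ) :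
    ∫ ξ, f ξ = ∫ p in polarCoord.target, p.1 • f !₂[p.1 * Real.cos p.2, p.1 * Real.sin p.2] := by
  have h := (Complex.orthonormalBasisOneI.repr.measurePreserving).integral_comp
    (Complex.orthonormalBasisOneI.repr.toHomeomorph.measurableEmbedding) f
  rw [← h, ← Complex.integral_comp_polarCoord_symm]
  refine integral_congr_ae (Filter.Eventually.of_forall fun p => ?_)
  have : Complex.orthonormalBasisOneI.repr (Complex.polarCoord.symm p)
      = !₂[p.1 * Real.cos p.2, p.1 * Real.sin p.2] := by
    ext i
    fin_cases i
    · simp [Complex.polarCoord_symm_apply, -Complex.ofReal_cos, -Complex.ofReal_sin]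
    · simp [Complex.polarCoord_symm_apply, -Complex.ofReal_cos, -Complex.ofReal_sin]
  simp only [this]

lemma aux_ang (h : V2 → ℂ) (h' : V2 → V2 →L[ℝ] ℂ) (hc : Continuous h')
    (hd : ∀ ξ, HasFDerivAt h (h' ξ) ξ) :
    ∫ ξ : V2, ((‖ξ‖ ^ 2)⁻¹ : ℝ) • h' ξ !₂[ξ 1, -ξ 0] = 0 := by
  rw [aux_polar]
  rw [show polarCoord.target = Set.Ioi (0 : ℝ) ×ˢ Set.Ioo (-Real.pi) Real.pi from rfl]
  by_cases hI : IntegrableOn (fun p : ℝ × ℝ =>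
      p.1 • (fun ξ : V2 => ((‖ξ‖ ^ 2)⁻¹ : ℝ) • h' ξ !₂[ξ 1, -ξ 0])
        !₂[p.1 * Real.cos p.2, p.1 * Real.sin p.2])
      (Set.Ioi (0 : ℝ) ×ˢ Set.Ioo (-Real.pi) Real.pi) (volume.prod volume)
  swap
  · exact integral_undef hI
  rw [Measure.volume_eq_prod, setIntegral_prod _ hI]
  refine (setIntegral_congr_fun measurableSet_Ioi (g := fun _ => (0 : ℂ)) ?_).trans (by simp)
  intro r hr
  have hr : 0 < r := hr
  have hc2 : ∀ θ : ℝ, HasDerivAt (fun θ : ℝ => (!₂[r * Real.cos θ, r * Real.sin θ] : V2))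
      (!₂[-(r * Real.sin θ), r * Real.cos θ]) θ := by
    intro θ
    have hpi : HasDerivAt (fun θ : ℝ => (![r * Real.cos θ, r * Real.sin θ] : Fin 2 → ℝ))
      (![-(r * Real.sin θ), r * Real.cos θ]) θ := by
     rw [hasDerivAt_pi]
     intro i
     fin_cases i
     · simpa using (Real.hasDerivAt_cos θ).const_mul r
     · simpa using (Real.hasDerivAt_sin θ).const_mul r
    exact ((PiLp.continuousLinearEquiv 2 ℝ (fun _ : Fin 2 => ℝ)).symm.hasFDerivAt).comp_hasDerivAt θ hpi
  have hcc : Continuous (fun θ : ℝ => (!₂[r * Real.cos θ, r * Real.sin θ] : V2)) :=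
    continuous_iff_continuousAt.2 fun θ => (hc2 θ).continuousAt
  have hcc' : Continuous (fun θ : ℝ => (!₂[-(r * Real.sin θ), r * Real.cos θ] : V2)) := by
    fun_prop
  have hn : ∀ θ : ℝ, ‖(!₂[r * Real.cos θ, r * Real.sin θ] : V2)‖ ^ 2 = r ^ 2 := by
    intro θ
    rw [EuclideanSpace.norm_sq_eq]
    simp only [Fin.sum_univ_two, Real.norm_eq_abs, sq_abs]
    simp
    linear_combination r ^ 2 * Real.sin_sq_add_cos_sq θ
  have hneg : ∀ θ : ℝ, (!₂[r * Real.sin θ, -(r * Real.cos θ)] : V2)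
      = -!₂[-(r * Real.sin θ), r * Real.cos θ] := by
    intro θ
    ext i
    fin_cases i <;> simp
  have key : ∫ θ in (-Real.pi)..Real.pi,
      h' !₂[r * Real.cos θ, r * Real.sin θ] !₂[-(r * Real.sin θ), r * Real.cos θ] = 0 := by
    rw [intervalIntegral.integral_eq_sub_of_hasDerivAt
      (f := fun θ : ℝ => h !₂[r * Real.cos θ, r * Real.sin θ])]
    · simp
    · intro θ _
      exact (hd _).comp_hasDerivAt θ (hc2 θ)
    · exact ((hc.comp hcc).clm_apply hcc').intervalIntegrable _ _
  simp only [hn]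
  simp only [Matrix.cons_val_zero, Matrix.cons_val_one, hneg, map_neg, smul_neg]
  rw [← integral_Ioc_eq_integral_Ioo, ← intervalIntegral.integral_of_le (by linarith [Real.pi_pos])]
  simp only [← smul_neg, intervalIntegral.integral_smul, intervalIntegral.integral_neg]
  rw [key]
  simp

lemma aux_int (g : SchwartzMap V2 ℂ) (k : Fin 2) (x : V2) :
    Integrable (fun ξ : V2 => cexp (((2 * Real.pi * inner ℝ ξ x : ℝ) : ℂ) * I) *
      ((-Complex.I * (ξ k : ℂ)) / ((2 * Real.pi * ‖ξ‖ ^ 2 : ℝ) : ℂ) * g ξ)) := by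
  obtain ⟨C0, _, h0⟩ := g.decay 0 0
  obtain ⟨C2, _, h2⟩ := g.decay 2 0
  have hb : Integrable (fun ξ : V2 => (C0 + C2) * (‖ξ‖⁻¹ * (1 + ‖ξ‖ ^ 2)⁻¹)) := by
    refine Integrable.const_mul ?_ _
    have := (integrable_fun_norm_addHaar (volume : Measure V2)
      (f := fun r : ℝ => r⁻¹ * (1 + r ^ 2)⁻¹)).2 ?_
    · exact this
    · refine (integrableOn_congr_fun (f := fun r : ℝ => (1 + r ^ 2)⁻¹) ?_ measurableSet_Ioi).1
        integrable_inv_one_add_sq.integrableOn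
      intro r hr
      have hr : 0 < r := hr
      simp
      field_simp
  refine hb.mono' ?_ (Filter.Eventually.of_forall fun ξ => ?_)
  · have := g.continuous.measurable
    apply Measurable.aestronglyMeasurable
    have h1 : Measurable fun ξ : V2 => ξ k := by fun_prop
    have h3 : Measurable fun ξ : V2 => (inner ℝ ξ x : ℝ) := by fun_prop
    fun_prop
  · rw [norm_mul, norm_mul, Complex.norm_exp_ofReal_mul_I, one_mul, norm_div, norm_mul, norm_neg,
      Complex.norm_I, one_mul, Complex.norm_real, Complex.norm_real]
    have hk : ‖ξ k‖ ≤ ‖ξ‖ := PiLp.norm_apply_le ξ k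
    have e0 := h0 ξ
    have e2 := h2 ξ
    simp at e0 e2
    rcases eq_or_ne ξ 0 with rfl | hξ
    · simp
    have hp : 0 < ‖ξ‖ := norm_pos_iff.2 hξ
    have a1 : ‖ξ k‖ / ‖(2 * Real.pi * ‖ξ‖ ^ 2 : ℝ)‖ ≤ ‖ξ‖⁻¹ := by
      rw [Real.norm_of_nonneg (by positivity : (0:ℝ) ≤ 2 * Real.pi * ‖ξ‖ ^ 2),
        div_le_iff₀ (by positivity)]
      have : ‖ξ‖⁻¹ * (2 * Real.pi * ‖ξ‖ ^ 2) = 2 * Real.pi * ‖ξ‖ := by field_simp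
      rw [this]
      nlinarith [Real.pi_gt_three]
    have a2 : ‖g ξ‖ ≤ (C0 + C2) * (1 + ‖ξ‖ ^ 2)⁻¹ := by
      rw [← div_eq_mul_inv, le_div_iff₀ (by positivity)]
      linarith
    calc _ ≤ ‖ξ‖⁻¹ * ((C0 + C2) * (1 + ‖ξ‖ ^ 2)⁻¹) := by gcongr
      _ = _ := by ring

lemma aux_T (k : Fin 2) (G : SchwartzMap V2 ℂ) (x : V2) :
    invLapDeriv k G x = ∫ ξ : V2, cexp (((2 * Real.pi * inner ℝ ξ x : ℝ) : ℂ) * I) *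
      ((-Complex.I * (ξ k : ℂ)) / ((2 * Real.pi * ‖ξ‖ ^ 2 : ℝ) : ℂ) * (𝓕 G) ξ) := by
  rw [invLapDeriv, Real.fourierInv_eq']
  simp only [smul_eq_mul]
  rfl

/-- coordinate times Schwartz -/
def aux_P (j : Fin 2) (G : SchwartzMap V2 ℂ) : SchwartzMap V2 ℂ :=
  SchwartzMap.smulLeftCLM ℂ (fun y : V2 => inner ℝ y (EuclideanSpace.single j (1 : ℝ))) G

lemma aux_P_apply (j : Fin 2) (G : SchwartzMap V2 ℂ) (y : V2) : aux_P j G y = (y j : ℂ) * G y := by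
  rw [aux_P, SchwartzMap.smulLeftCLM_apply_apply (by fun_prop)]
  simp [EuclideanSpace.inner_single_right]

lemma aux_P_fourier (j : Fin 2) (G : SchwartzMap V2 ℂ) (ξ : V2) :
    fderiv ℝ (𝓕 G : SchwartzMap V2 ℂ) ξ (EuclideanSpace.single j (1 : ℝ))
      = -(2 * Real.pi * I) * (𝓕 (aux_P j G)) ξ := by
  rw [← SchwartzMap.lineDerivOp_apply_eq_fderiv, SchwartzMap.lineDerivOp_fourier_eq,
    ← SchwartzMap.fourierTransformCLM_apply ℂ, map_smul]
  rfl

lemma aux_main (G : SchwartzMap V2 ℂ) (x : V2) :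
    (x 0 : ℂ) * invLapDeriv 1 G x - (x 1 : ℂ) * invLapDeriv 0 G x
      = invLapDeriv 1 (aux_P 0 G) x - invLapDeriv 0 (aux_P 1 G) x := by
  simp only [aux_T]
  have i1 := aux_int (𝓕 G) 1 x
  have i0 := aux_int (𝓕 G) 0 x
  have j1 := aux_int (𝓕 (aux_P 0 G)) 1 x
  have j0 := aux_int (𝓕 (aux_P 1 G)) 0 x
  rw [← sub_eq_zero]
  rw [← integral_const_mul, ← integral_const_mul, ← integral_sub (i1.const_mul _) (i0.const_mul _),
    ← integral_sub j1 j0]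
  refine (integral_sub ((i1.const_mul _).sub (i0.const_mul _)) (j1.sub j0)).symm.trans ?_
  set g : SchwartzMap V2 ℂ := 𝓕 G with hg
  let L : V2 →L[ℝ] ℂ := (2 * Real.pi * I : ℂ) • (Complex.ofRealCLM.comp ((innerSL ℝ x : V2 →L[ℝ] ℝ)))
  let E : V2 → ℂ := fun ξ => cexp (L ξ)
  have hE : ∀ ξ, HasFDerivAt E (E ξ • L) ξ := fun ξ => L.hasFDerivAt.cexp
  have hEc : Continuous E := by fun_prop
  have hEe : ∀ ξ : V2, cexp (((2 * Real.pi * inner ℝ ξ x : ℝ) : ℂ) * I) = E ξ := by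
    intro ξ
    simp only [E, L]
    congr 1
    simp [real_inner_comm]
    ring
  have hL : ∀ ξ : V2, L !₂[ξ 1, -ξ 0] = 2 * Real.pi * I * (x 0 * ξ 1 - x 1 * ξ 0) := by
    intro ξ
    simp [L, PiLp.inner_apply, Fin.sum_univ_two]
    ring
  have hgd : ∀ ξ : V2, HasFDerivAt g (fderiv ℝ g ξ) ξ := fun ξ => g.differentiableAt.hasFDerivAt
  have hgc : Continuous (fderiv ℝ g) := (g.smooth 1).continuous_fderiv (by simp)
  have hang := aux_ang (fun ξ => E ξ * g ξ) (fun ξ => E ξ • fderiv ℝ g ξ + g ξ • (E ξ • L))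
    (by have := g.continuous; fun_prop) (fun ξ => (hE ξ).mul (hgd ξ))
  have hv : ∀ ξ : V2, (!₂[ξ 1, -ξ 0] : V2) = ξ 1 • EuclideanSpace.single 0 (1 : ℝ)
      - ξ 0 • EuclideanSpace.single 1 (1 : ℝ) := by
    intro ξ
    ext i
    fin_cases i <;> simp
  have hD : ∀ ξ : V2, fderiv ℝ g ξ !₂[ξ 1, -ξ 0] =
      -(2 * Real.pi * I) * (ξ 1 * (𝓕 (aux_P 0 G)) ξ - ξ 0 * (𝓕 (aux_P 1 G)) ξ) := by
    intro ξ
    rw [hv, map_sub, map_smul, map_smul, hg, aux_P_fourier, aux_P_fourier]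
    simp only [Complex.real_smul]
    ring
  rw [← mul_zero (-(1 / (4 * Real.pi ^ 2) : ℂ)), ← hang, ← integral_const_mul]
  refine integral_congr_ae (Filter.Eventually.of_forall fun ξ => ?_)
  simp only [Pi.sub_apply, ContinuousLinearMap.add_apply, ContinuousLinearMap.smul_apply, hD, hL, hEe]
  have hpi : (Real.pi : ℂ) ≠ 0 := by exact_mod_cast Real.pi_ne_zero
  simp only [Complex.real_smul, smul_eq_mul]
  push_cast
  rcases eq_or_ne ξ 0 with rfl | hξ
  · simp
  have hp : (‖ξ‖ : ℂ) ≠ 0 := by exact_mod_cast (norm_pos_iff.2 hξ).ne'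
  field_simp
  ring

lemma aux_neg (k : Fin 2) (f : V2 → ℂ) (x : V2) :
    invLapDeriv k (fun y => -f y) x = -invLapDeriv k f x := by
  simp only [invLapDeriv, Real.fourierInv_eq, Real.fourier_eq, smul_neg, integral_neg, mul_neg]

lemma aux_zero (k : Fin 2) (x : V2) : invLapDeriv k (fun _ => 0) x = 0 := by
  simp only [invLapDeriv, Real.fourierInv_eq, Real.fourier_eq, smul_zero, integral_zero, mul_zero]

/-- Identity (3.26): for `t > 0` and `ℂ²`-valued Schwartz `v₁, v₂`,
`2t⁻¹ x_j Δ^{−1}∂_k Im(v̄_{1k}v_{2j} + v̄_{2k}v_{1j}) =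
 2t⁻¹ Δ^{−1}∂_k Im(v̄_{1k}(x·v₂) + v̄_{2k}(x·v₁))` (summation over `j, k`). -/
theorem stmt_12 (k : ℝ) (hk1 : 1 < k) (hk2 : k < 2) (t : ℝ) (ht : 0 < t)
    (v₁ v₂ : Fin 2 → SchwartzMap V2 ℂ) :
    (fun x : V2 => (2 / (t : ℂ)) * ∑ j : Fin 2, (x j : ℂ) *
        ∑ k' : Fin 2, invLapDeriv k'
          (fun y => (((starRingEnd ℂ) (v₁ k' y) * v₂ j y
              + (starRingEnd ℂ) (v₂ k' y) * v₁ j y).im : ℂ)) x)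
      = (fun x : V2 => (2 / (t : ℂ)) * ∑ k' : Fin 2, invLapDeriv k'
          (fun y => (((starRingEnd ℂ) (v₁ k' y) * (∑ j : Fin 2, (y j : ℂ) * v₂ j y)
              + (starRingEnd ℂ) (v₂ k' y) * (∑ j : Fin 2, (y j : ℂ) * v₁ j y)).im : ℂ)) x) := by
  funext x
  congr 1
  let cj : SchwartzMap V2 ℂ → SchwartzMap V2 ℂ := fun f =>
    SchwartzMap.postcompCLM (𝕜 := ℝ) (Complex.conjCLE : ℂ →L[ℝ] ℂ) f
  let G : SchwartzMap V2 ℂ := SchwartzMap.postcompCLM (𝕜 := ℝ) (Complex.ofRealCLM.comp Complex.imCLM)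
    (SchwartzMap.pairing (ContinuousLinearMap.mul ℝ ℂ) (cj (v₁ 1)) (v₂ 0)
      + SchwartzMap.pairing (ContinuousLinearMap.mul ℝ ℂ) (cj (v₂ 1)) (v₁ 0))
  have hG : ∀ y, G y = (((starRingEnd ℂ) (v₁ 1 y) * v₂ 0 y
              + (starRingEnd ℂ) (v₂ 1 y) * v₁ 0 y).im : ℂ) := fun y => rfl
  have hd : ∀ j : Fin 2, (fun y => (((starRingEnd ℂ) (v₁ j y) * v₂ j y
              + (starRingEnd ℂ) (v₂ j y) * v₁ j y).im : ℂ)) = fun _ => 0 := by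
    intro j
    funext y
    norm_cast
    simp
    ring
  have h01 : (fun y => (((starRingEnd ℂ) (v₁ 0 y) * v₂ 1 y
              + (starRingEnd ℂ) (v₂ 0 y) * v₁ 1 y).im : ℂ)) = fun y => - G y := by
    funext y
    rw [hG]
    norm_cast
    simp
    ring
  have h10 : (fun y => (((starRingEnd ℂ) (v₁ 1 y) * v₂ 0 y
              + (starRingEnd ℂ) (v₂ 1 y) * v₁ 0 y).im : ℂ)) = G := by
    funext y
    rw [hG]
  have r1 : (fun y : V2 => (((starRingEnd ℂ) (v₁ 1 y) * ((y 0 : ℂ) * v₂ 0 y + (y 1 : ℂ) * v₂ 1 y)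
              + (starRingEnd ℂ) (v₂ 1 y) * ((y 0 : ℂ) * v₁ 0 y + (y 1 : ℂ) * v₁ 1 y)).im : ℂ))
       = aux_P 0 G := by
    funext y
    rw [aux_P_apply, hG]
    norm_cast
    simp
    ring
  have r0 : (fun y : V2 => (((starRingEnd ℂ) (v₁ 0 y) * ((y 0 : ℂ) * v₂ 0 y + (y 1 : ℂ) * v₂ 1 y)
              + (starRingEnd ℂ) (v₂ 0 y) * ((y 0 : ℂ) * v₁ 0 y + (y 1 : ℂ) * v₁ 1 y)).im : ℂ))
       = fun y => - aux_P 1 G y := by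
    funext y
    rw [aux_P_apply, hG]
    norm_cast
    simp
    ring
  simp only [Fin.sum_univ_two]
  rw [hd 0, hd 1, h01, h10, r1, r0, aux_neg, aux_neg, aux_zero, aux_zero]
  linear_combination aux_main G x
end
end
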